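/- Let P and Q be two probability measures on the same measurable space and let A be any event. Then P(A) + Q(Aᶜ) ≥ (1/2)·exp(−D(P ‖ Q)), where D(P‖Q) is the Kullback–Leibler divergence. -/

import Mathlib

open MeasureTheory
open scoped ENNReal Classical

/-- Real-valued Kullback–Leibler divergence (valued in `ℝ≥0∞`, equal to `⊤` when `P` is
not absolutely continuous w.r.t. `Q` or the log-likelihood ratio is not integrable). -/
noncomputable def klDiv {Ω : Type*} [MeasurableSpace Ω] (P Q : Measure Ω) : ℝ≥0∞ :=
  if P ≪ Q ∧ Integrable (fun x => Real.log (P.rnDeriv Q x).toReal) P then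
    ENNReal.ofReal (∫ x, Real.log (P.rnDeriv Q x).toReal ∂P)
  else ⊤

/-- Log-sum inequality on a measurable set. -/
lemma bh_log_sum {Ω : Type*} [MeasurableSpace Ω]
    (P Q : Measure Ω) [IsProbabilityMeasure P] [IsProbabilityMeasure Q]
    (hac : P ≪ Q) (hint : Integrable (fun x => Real.log (P.rnDeriv Q x).toReal) P)
    (A : Set Ω) (hA : MeasurableSet A) :
    P.real A * Real.log (P.real A / Q.real A)
      ≤ ∫ x in A, Real.log (P.rnDeriv Q x).toReal ∂P := by
  rcases eq_or_ne (P A) 0 with h0 | h0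
  · have : P.restrict A = 0 := by simpa using h0
    simp [this, measureReal_def, h0]
  have hq0 : Q A ≠ 0 := fun h => h0 (hac h)
  have hp : 0 < P.real A := ENNReal.toReal_pos h0 (measure_ne_top _ _)
  have hq : 0 < Q.real A := ENNReal.toReal_pos hq0 (measure_ne_top _ _)
  set c := P.real A / Q.real A with hc
  have hcpos : 0 < c := by positivity
  have hI : Integrable (fun x => (Q.rnDeriv P x).toReal) P := Measure.integrable_toReal_rnDeriv
  have hle : ∫ x in A, (Q.rnDeriv P x).toReal ∂P ≤ Q.real A :=
    Measure.setIntegral_toReal_rnDeriv_le (measure_ne_top _ _)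
  have hpt : ∀ᵐ x ∂P, Real.log c + 1 - c * (Q.rnDeriv P x).toReal
      ≤ Real.log (P.rnDeriv Q x).toReal := by
    filter_upwards [Measure.inv_rnDeriv hac, Measure.rnDeriv_pos hac,
      hac.ae_le (Measure.rnDeriv_lt_top P Q)] with x hx hpos0 hlt
    have hpos : 0 < (P.rnDeriv Q x).toReal := ENNReal.toReal_pos hpos0.ne' hlt.ne
    rw [← hx, Pi.inv_apply, ENNReal.toReal_inv]
    set r := (P.rnDeriv Q x).toReal
    have h1 := Real.log_le_sub_one_of_pos (show 0 < c * r⁻¹ by positivity)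
    rw [Real.log_mul hcpos.ne' (by positivity), Real.log_inv] at h1
    linarith
  have hmono := integral_mono_ae (μ := P.restrict A)
    (((integrable_const (Real.log c + 1)).sub (hI.const_mul c)).integrableOn (s := A))
    (hint.integrableOn (s := A)) (ae_restrict_of_ae hpt)
  refine le_trans ?_ hmono
  have hcalc : ∫ x in A, (Real.log c + 1 - c * (Q.rnDeriv P x).toReal) ∂P
      = P.real A * (Real.log c + 1) - c * ∫ x in A, (Q.rnDeriv P x).toReal ∂P := by
    rw [integral_sub (integrable_const _) (hI.const_mul c).integrableOn, integral_const_mul]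
    simp
  change _ ≤ ∫ x in A, (Real.log c + 1 - c * (Q.rnDeriv P x).toReal) ∂P
  rw [hcalc]
  have h2 := mul_le_mul_of_nonneg_left hle hcpos.le
  have h3 : c * Q.real A = P.real A := by rw [hc]; field_simp
  linarith

/-- The two-point inequality. -/
lemma bh_real (p q D : ℝ) (hp0 : 0 ≤ p) (hp1 : p ≤ 1) (hq0 : 0 ≤ q) (hq1 : q ≤ 1)
    (h1 : q = 0 → p = 0) (h2 : q = 1 → p = 1)
    (hD : p * Real.log (p / q) + (1 - p) * Real.log ((1 - p) / (1 - q)) ≤ D) :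
    1 / 2 * Real.exp (-D) ≤ p + (1 - q) := by
  rcases hp0.eq_or_lt with rfl | hp0
  · have hq : 0 < 1 - q := by
      rcases hq1.eq_or_lt with h | h
      · exact absurd (h2 h) (by norm_num)
      · linarith
    simp only [zero_mul, sub_zero, one_mul, zero_add, one_div, Real.log_inv] at hD
    have : Real.exp (-D) ≤ 1 - q := by
      rw [← Real.le_log_iff_exp_le hq]; linarith
    linarith
  have hq : 0 < q := lt_of_le_of_ne hq0 fun h => hp0.ne' (h1 h.symm)
  rcases hp1.eq_or_lt with rfl | hp1
  · simp only [sub_self, zero_mul, one_mul, add_zero, one_div, Real.log_inv] at hD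
    have : Real.exp (-D) ≤ q := by
      rw [← Real.le_log_iff_exp_le hq]; linarith
    linarith
  have hq' : 0 < 1 - q := by
    rcases hq1.eq_or_lt with h | h
    · exact absurd (h2 h) hp1.ne
    · linarith
  have hp' : 0 < 1 - p := by linarith
  obtain ⟨x, hx, hxp⟩ : ∃ x : ℝ, 0 < x ∧ x ^ 2 = p := ⟨_, Real.sqrt_pos.2 hp0, Real.sq_sqrt hp0.le⟩
  obtain ⟨y, hy, hyq⟩ : ∃ x : ℝ, 0 < x ∧ x ^ 2 = q := ⟨_, Real.sqrt_pos.2 hq, Real.sq_sqrt hq.le⟩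
  obtain ⟨x', hx', hxp'⟩ : ∃ x : ℝ, 0 < x ∧ x ^ 2 = 1 - p :=
    ⟨_, Real.sqrt_pos.2 hp', Real.sq_sqrt hp'.le⟩
  obtain ⟨y', hy', hyq'⟩ : ∃ x : ℝ, 0 < x ∧ x ^ 2 = 1 - q :=
    ⟨_, Real.sqrt_pos.2 hq', Real.sq_sqrt hq'.le⟩
  have hcc := strictConcaveOn_log_Ioi.concaveOn.2 (show y / x ∈ Set.Ioi (0:ℝ) from div_pos hy hx)
    (show y' / x' ∈ Set.Ioi (0:ℝ) from div_pos hy' hx') hp0.le hp'.le (by ring)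
  simp only [smul_eq_mul] at hcc
  have e : p * (y / x) + (1 - p) * (y' / x') = x * y + x' * y' := by
    rw [← hxp', ← hxp]; field_simp
  have l1 : Real.log (p / q) = -(2 * Real.log (y / x)) := by
    rw [← hxp, ← hyq, ← div_pow, Real.log_pow, ← inv_div y x, Real.log_inv]
    push_cast; ring
  have l2 : Real.log ((1 - p) / (1 - q)) = -(2 * Real.log (y' / x')) := by
    rw [← hxp', ← hyq', ← div_pow, Real.log_pow, ← inv_div y' x', Real.log_inv]
    push_cast; ring
  rw [e] at hcc
  rw [l1, l2] at hD
  have hpos : 0 < x * y + x' * y' := by positivity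
  have h3 : Real.exp (-D) ≤ (x * y + x' * y') ^ 2 := by
    rw [← Real.le_log_iff_exp_le (by positivity), Real.log_pow]
    push_cast; linarith
  have h4 : (x * y + x' * y') ^ 2 ≤ 2 * (p * q + (1 - p) * (1 - q)) := by
    have : 2 * (p * q + (1 - p) * (1 - q)) = 2 * ((x * y) ^ 2 + (x' * y') ^ 2) := by
      rw [mul_pow, mul_pow, hxp, hyq, hxp', hyq']
    rw [this]
    nlinarith [sq_nonneg (x * y - x' * y')]
  have h5 := mul_pos hp0 hq'
  nlinarith [h3, h4, h5]

/-- Bretagnolle–Huber inequality: `P(A) + Q(Aᶜ) ≥ (1/2) exp (- D(P‖Q))`.  (When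
`D(P‖Q) = ⊤` the right-hand side is `0` and the inequality is trivial.) -/
theorem bretagnolle_huber {Ω : Type*} [MeasurableSpace Ω]
    (P Q : Measure Ω) [IsProbabilityMeasure P] [IsProbabilityMeasure Q]
    (A : Set Ω) (hA : MeasurableSet A) (hfin : klDiv P Q ≠ ⊤) :
    (1 / 2) * Real.exp (-(klDiv P Q).toReal) ≤ (P A).toReal + (Q Aᶜ).toReal := by
  have h : P ≪ Q ∧ Integrable (fun x => Real.log (P.rnDeriv Q x).toReal) P := by
    by_contra h
    exact hfin (by rw [klDiv, if_neg h])
  obtain ⟨hac, hint⟩ := h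
  have hnn : 0 ≤ ∫ x, Real.log (P.rnDeriv Q x).toReal ∂P := by
    simpa using bh_log_sum P Q hac hint Set.univ MeasurableSet.univ
  have hkl : (klDiv P Q).toReal = ∫ x, Real.log (P.rnDeriv Q x).toReal ∂P := by
    rw [klDiv, if_pos ⟨hac, hint⟩, ENNReal.toReal_ofReal hnn]
  rw [hkl]
  have hs1 := bh_log_sum P Q hac hint A hA
  have hs2 := bh_log_sum P Q hac hint Aᶜ hA.compl
  rw [probReal_compl_eq_one_sub hA, probReal_compl_eq_one_sub hA] at hs2
  have hsum := integral_add_compl hA hint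
  have hz : ∀ B : Set Ω, Q.real B = 0 → P.real B = 0 := by
    intro B hB
    rw [measureReal_eq_zero_iff] at hB ⊢
    exact hac hB
  change _ ≤ P.real A + Q.real Aᶜ
  rw [probReal_compl_eq_one_sub hA]
  refine bh_real _ _ _ measureReal_nonneg measureReal_le_one measureReal_nonneg
    measureReal_le_one (hz A) ?_ (by linarith)
  intro h
  have := hz Aᶜ
  rw [probReal_compl_eq_one_sub hA, probReal_compl_eq_one_sub hA] at this
  linarith [this (by linarith)]
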